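/- Let d ≥ 1 and let s ≥ 1 be an integer. There exists a constant C > 0, depending only on s and d, such that for all smooth functions f, g : ℝ^d → ℝ and every multi-index α with |α| ≤ s, sup_{x ∈ ℝ^d} ‖D^α(fg)‖_{L²(B_1(x))} ≤ C ( ‖f‖_{L^∞} · ∑_{|β| ≤ s} sup_{x} ‖D^β g‖_{L²(B_1(x))} + ‖g‖_{L^∞} · ∑_{|β| ≤ s} sup_{x} ‖D^β f‖_{L²(B_1(x))} ) (an inequality of extended nonnegative reals). -/

import Mathlib

open MeasureTheory Metric
open scoped ENNReal

noncomputable section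

/-- The partial derivative in the `i`-th coordinate direction. -/
def pd {d : ℕ} {F : Type*} [NormedAddCommGroup F] [NormedSpace ℝ F]
    (i : Fin d) (f : EuclideanSpace ℝ (Fin d) → F) : EuclideanSpace ℝ (Fin d) → F :=
  fun x => fderiv ℝ f x (EuclideanSpace.single i 1)

/-- The partial derivative `D^α` associated with a multi-index `α`. -/
def Dm {d : ℕ} {F : Type*} [NormedAddCommGroup F] [NormedSpace ℝ F]
    (α : Fin d → ℕ) (f : EuclideanSpace ℝ (Fin d) → F) : EuclideanSpace ℝ (Fin d) → F :=
  (List.finRange d).foldr (fun i g => (pd i)^[α i] g) f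

/-- The finite set of multi-indices `α` on `ℝ^d` with `|α| ≤ s`. -/
def mSet (d s : ℕ) : Finset (Fin d → ℕ) :=
  (Finset.Iic (fun _ => s : Fin d → ℕ)).filter fun α => (∑ i, α i) ≤ s

/-- The uniformly local Sobolev norm
`‖f‖_{H^s_ul} = ∑_{|α| ≤ s} sup_x ‖D^α f‖_{L²(B₁(x))}`. -/
def ulSobolev (d s : ℕ) {F : Type*} [NormedAddCommGroup F] [NormedSpace ℝ F]
    (f : EuclideanSpace ℝ (Fin d) → F) : ℝ≥0∞ :=
  ∑ α ∈ mSet d s, ⨆ x : EuclideanSpace ℝ (Fin d),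
    eLpNorm (Dm α f) 2 (volume.restrict (ball x 1))

section WordDerivatives

variable {d : ℕ} {f g : EuclideanSpace ℝ (Fin d) → ℝ}

/-- The iterated partial derivative along a word of coordinate directions, the head being
applied last. -/
def wordDeriv (w : List (Fin d)) (f : EuclideanSpace ℝ (Fin d) → ℝ) :
    EuclideanSpace ℝ (Fin d) → ℝ :=
  w.foldr pd f

@[simp]
theorem wordDeriv_nil : wordDeriv [] f = f := rfl

@[simp]
theorem wordDeriv_cons (i : Fin d) (w : List (Fin d)) :
    wordDeriv (i :: w) f = pd i (wordDeriv w f) := rfl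

theorem wordDeriv_append (v w : List (Fin d)) :
    wordDeriv (v ++ w) f = wordDeriv v (wordDeriv w f) :=
  List.foldr_append

theorem ContDiff.pd (hf : ContDiff ℝ (⊤ : ℕ∞) f) (i : Fin d) :
    ContDiff ℝ (⊤ : ℕ∞) (pd i f) :=
  (hf.fderiv_right (by simp)).clm_apply contDiff_const

theorem ContDiff.wordDeriv (hf : ContDiff ℝ (⊤ : ℕ∞) f) (w : List (Fin d)) :
    ContDiff ℝ (⊤ : ℕ∞) (wordDeriv w f) := by
  induction w with
  | nil => exact hf
  | cons i w ih => exact ih.pd i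

theorem ContDiff.continuous_wordDeriv (hf : ContDiff ℝ (⊤ : ℕ∞) f) (w : List (Fin d)) :
    Continuous (_root_.wordDeriv w f) :=
  (hf.wordDeriv w).continuous

theorem ContDiff.differentiable_of_top (hf : ContDiff ℝ (⊤ : ℕ∞) f) : Differentiable ℝ f :=
  hf.differentiable (by simp)

theorem tsupport_wordDeriv_subset (w : List (Fin d)) :
    tsupport (wordDeriv w f) ⊆ tsupport f := by
  induction w with
  | nil => exact subset_rfl
  | cons i w ih => exact (tsupport_fderiv_apply_subset ℝ _).trans ih

theorem HasCompactSupport.wordDeriv (hf : HasCompactSupport f) (w : List (Fin d)) :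
    HasCompactSupport (wordDeriv w f) :=
  hf.of_isClosed_subset (isClosed_tsupport _) (tsupport_wordDeriv_subset w)

theorem Filter.EventuallyEq.wordDeriv {x : EuclideanSpace ℝ (Fin d)} (h : f =ᶠ[nhds x] g)
    (w : List (Fin d)) : wordDeriv w f =ᶠ[nhds x] wordDeriv w g := by
  induction w with
  | nil => exact h
  | cons i w ih => exact (ih.fderiv (𝕜 := ℝ)).mono fun y hy => by simp [pd, hy]

theorem wordDeriv_const_mul (c : ℝ) (w : List (Fin d)) :
    wordDeriv w (fun x => c * f x) = fun x => c * wordDeriv w f x := by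
  induction w with
  | nil => rfl
  | cons i w ih =>
    ext x
    rw [wordDeriv_cons, ih]
    change fderiv ℝ (c • wordDeriv w f) x _ = _
    rw [fderiv_const_smul_field]
    rfl

theorem wordDeriv_zero (w : List (Fin d)) :
    wordDeriv w (fun _ : EuclideanSpace ℝ (Fin d) => (0 : ℝ)) = fun _ => 0 := by
  simpa using wordDeriv_const_mul (f := fun _ : EuclideanSpace ℝ (Fin d) => (0 : ℝ)) 0 w

theorem wordDeriv_comp_sub (a : EuclideanSpace ℝ (Fin d)) (w : List (Fin d)) :
    wordDeriv w (fun x => f (x - a)) = fun x => wordDeriv w f (x - a) := by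
  induction w with
  | nil => rfl
  | cons i w ih =>
    ext x
    rw [wordDeriv_cons, ih]
    simp only [pd, wordDeriv_cons]
    rw [fderiv_comp_sub]

theorem pd_comm (hf : ContDiff ℝ (⊤ : ℕ∞) f) (i j : Fin d) : pd i (pd j f) = pd j (pd i f) := by
  ext x
  have hsymm : IsSymmSndFDerivAt ℝ f x := hf.contDiffAt.isSymmSndFDerivAt
    (by simpa using WithTop.coe_le_coe.2 (le_top : (2 : ℕ∞) ≤ ⊤))
  have hdiff : DifferentiableAt ℝ (fderiv ℝ f) x :=
    (hf.fderiv_right (m := 1) (by norm_cast)).differentiable (by simp) x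
  have hpd (k l : Fin d) : pd k (pd l f) x =
      fderiv ℝ (fderiv ℝ f) x (EuclideanSpace.single k 1) (EuclideanSpace.single l 1) := by
    change fderiv ℝ (fun y => fderiv ℝ f y (EuclideanSpace.single l 1)) x _ = _
    rw [fderiv_clm_apply hdiff (differentiableAt_const _)]
    simp
  rw [hpd, hpd, hsymm.eq]

theorem wordDeriv_eq_of_perm (hf : ContDiff ℝ (⊤ : ℕ∞) f) {v w : List (Fin d)}
    (h : v.Perm w) : wordDeriv v f = wordDeriv w f := by
  induction h with
  | nil => rfl
  | cons i _ ih => rw [wordDeriv_cons, ih, wordDeriv_cons]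
  | swap i j w => exact pd_comm (hf.wordDeriv w) j i
  | trans _ _ ih₁ ih₂ => exact ih₁.trans ih₂

/-- The nondecreasing word in which the letter `i` occurs `α i` times. -/
def multiIndexWord (α : Fin d → ℕ) : List (Fin d) :=
  (List.finRange d).flatMap fun i => List.replicate (α i) i

theorem Dm_eq_wordDeriv (α : Fin d → ℕ) : Dm α f = wordDeriv (multiIndexWord α) f := by
  have hpow (n : ℕ) (i : Fin d) (h : EuclideanSpace ℝ (Fin d) → ℝ) :
      (pd i)^[n] h = wordDeriv (List.replicate n i) h := by
    induction n with
    | zero => rfl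
    | succ n ih => rw [Function.iterate_succ_apply', ih]; rfl
  unfold Dm multiIndexWord
  induction List.finRange d with
  | nil => rfl
  | cons i l ih => rw [List.foldr_cons, ih, List.flatMap_cons, wordDeriv_append, hpow]

theorem length_multiIndexWord (α : Fin d → ℕ) : (multiIndexWord α).length = ∑ i, α i := by
  simp [multiIndexWord, List.length_flatMap, ← List.ofFn_eq_map, List.sum_ofFn]

theorem count_multiIndexWord (α : Fin d → ℕ) (i : Fin d) :
    (multiIndexWord α).count i = α i := by
  simp [multiIndexWord, List.count_flatMap, Function.comp_def, List.count_replicate,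
    ← List.ofFn_eq_map, List.sum_ofFn]

theorem wordDeriv_eq_Dm (hf : ContDiff ℝ (⊤ : ℕ∞) f) (w : List (Fin d)) :
    wordDeriv w f = Dm (fun i => w.count i) f := by
  rw [Dm_eq_wordDeriv]
  refine wordDeriv_eq_of_perm hf (List.perm_iff_count.2 fun i => ?_)
  rw [count_multiIndexWord]

theorem count_mem_mSet {s : ℕ} {w : List (Fin d)} (hw : w.length ≤ s) :
    (fun i => w.count i) ∈ mSet d s := by
  refine Finset.mem_filter.2 ⟨Finset.mem_Iic.2 fun i => List.count_le_length.trans hw, ?_⟩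
  refine le_trans (le_of_eq ?_) hw
  rw [← length_multiIndexWord]
  exact List.Perm.length_eq (List.perm_iff_count.2 fun i => count_multiIndexWord _ i)

/-- The Leibniz rule along a word. -/
theorem exists_wordDeriv_mul_eq_sum (w : List (Fin d)) :
    ∃ (ι : Type) (_ : Fintype ι) (u v : ι → List (Fin d)),
      (∀ k, (u k).length + (v k).length = w.length) ∧
      ∀ f g : EuclideanSpace ℝ (Fin d) → ℝ, ContDiff ℝ (⊤ : ℕ∞) f → ContDiff ℝ (⊤ : ℕ∞) g →
        wordDeriv w (fun x => f x * g x) =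
          ∑ k, fun x => wordDeriv (u k) f x * wordDeriv (v k) g x := by
  induction w with
  | nil =>
    refine ⟨Unit, inferInstance, fun _ => [], fun _ => [], fun _ => rfl, fun f g _ _ => ?_⟩
    simp
  | cons i w ih =>
    obtain ⟨ι, _, u, v, hlen, hsum⟩ := ih
    refine ⟨ι ⊕ ι, inferInstance, Sum.elim (fun k => i :: u k) u,
      Sum.elim v (fun k => i :: v k), ?_, fun f g hf hg => ?_⟩
    · rintro (k | k) <;> simp [← hlen k] <;> ring
    · ext x
      have hu (k : ι) := (hf.wordDeriv (u k)).differentiable_of_top x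
      have hv (k : ι) := (hg.wordDeriv (v k)).differentiable_of_top x
      rw [wordDeriv_cons, hsum f g hf hg, pd, fderiv_sum fun k _ => (hu k).fun_mul (hv k)]
      simp only [Fintype.sum_sum_type, Sum.elim_inl, Sum.elim_inr, Finset.sum_apply,
        wordDeriv_cons, sum_apply, ← Finset.sum_add_distrib]
      refine Finset.sum_congr rfl fun k _ => ?_
      rw [fderiv_fun_mul (hu k) (hv k)]
      simp [pd]
      ring

end WordDerivatives

section Interpolation

theorem hasDerivAt_abs_rpow_mul_self {p : ℝ} (hp : 0 < p) (t : ℝ) :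
    HasDerivAt (fun t : ℝ => |t| ^ p * t) ((p + 1) * |t| ^ p) t := by
  rcases eq_or_ne t 0 with rfl | ht
  · rw [hasDerivAt_iff_tendsto_slope_zero]
    have hlim : Filter.Tendsto (fun t : ℝ => |t| ^ p) (nhdsWithin 0 {0}ᶜ) (nhds (|0| ^ p)) :=
      ((continuous_abs.rpow_const fun _ => Or.inr hp.le).tendsto 0).mono_left nhdsWithin_le_nhds
    simp only [abs_zero, Real.zero_rpow hp.ne', mul_zero] at hlim ⊢
    refine hlim.congr' (eventually_nhdsWithin_of_forall fun t (ht : t ≠ 0) => ?_)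
    simp only [zero_add, sub_zero, smul_eq_mul]
    field_simp
  · have habs := ((hasDerivAt_abs ht).rpow_const (p := p) (Or.inl (abs_ne_zero.2 ht))).mul
      (hasDerivAt_id t)
    refine habs.congr_deriv ?_
    have hpow : |t| ^ p = |t| ^ (p - 1) * |t| := by
      rw [← Real.rpow_add_one (abs_ne_zero.2 ht), sub_add_cancel]
    have hsign : (SignType.sign t : ℝ) * t = |t| := sign_mul_self t
    simp only [id]
    rw [hpow, ← hsign]
    ring

/-- Young's inequality for three factors, with all the loss put on the second one. -/
theorem exists_young_three {w₁ w₂ w₃ : ℝ} (hw₁ : 0 ≤ w₁) (hw₂ : 0 < w₂) (hw₃ : 0 ≤ w₃)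
    (hw : w₁ + w₂ + w₃ = 1) {K ε : ℝ} (hK : 0 ≤ K) (hε : 0 < ε) :
    ∃ C : ℝ, 0 ≤ C ∧ ∀ X Y Z : ℝ, 0 ≤ X → 0 ≤ Y → 0 ≤ Z →
      K * (X ^ w₁ * Y ^ w₂ * Z ^ w₃) ≤ ε * X + C * Y + ε * Z := by
  set C : ℝ := (K / (ε ^ w₁ * ε ^ w₃)) ^ w₂⁻¹ with hC
  have hC0 : 0 ≤ C := by positivity
  refine ⟨C, hC0, fun X Y Z hX hY hZ => ?_⟩
  have hCpow : C ^ w₂ = K / (ε ^ w₁ * ε ^ w₃) := Real.rpow_inv_rpow (by positivity) hw₂.ne'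
  have hmean := Real.geom_mean_le_arith_mean3_weighted hw₁ hw₂.le hw₃
    (mul_nonneg hε.le hX) (mul_nonneg hC0 hY) (mul_nonneg hε.le hZ) hw
  rw [Real.mul_rpow hε.le hX, Real.mul_rpow hC0 hY, Real.mul_rpow hε.le hZ, hCpow] at hmean
  have hleft : ε ^ w₁ * X ^ w₁ * (K / (ε ^ w₁ * ε ^ w₃) * Y ^ w₂) * (ε ^ w₃ * Z ^ w₃) =
      K * (X ^ w₁ * Y ^ w₂ * Z ^ w₃) := by
    have := (Real.rpow_pos_of_pos hε w₁).ne'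
    have := (Real.rpow_pos_of_pos hε w₃).ne'
    field_simp
  rw [hleft] at hmean
  refine hmean.trans (add_le_add_three ?_ ?_ ?_)
  · exact mul_le_of_le_one_left (by positivity) (by linarith)
  · exact mul_le_of_le_one_left (by positivity) (by linarith)
  · exact mul_le_of_le_one_left (by positivity) (by linarith)

/-- The power `|t| ^ (2k/j)` adapted to derivatives of order `j` in the interpolation between
`L^∞` and `L²` bounds on derivatives of order `k`; by convention it vanishes for `j = 0`. -/
def gnPow (k j : ℕ) (t : ℝ) : ℝ :=
  if j = 0 then 0 else |t| ^ (2 * k / j : ℝ)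

theorem gnPow_nonneg (k j : ℕ) (t : ℝ) : 0 ≤ gnPow k j t := by
  unfold gnPow
  split_ifs <;> positivity

theorem gnPow_of_pos {k j : ℕ} (hj : 0 < j) (t : ℝ) : gnPow k j t = |t| ^ (2 * k / j : ℝ) :=
  if_neg hj.ne'

theorem gnPow_self {k : ℕ} (hk : 0 < k) (t : ℝ) : gnPow k k t = t ^ 2 := by
  have : (k : ℝ) ≠ 0 := by positivity
  rw [gnPow_of_pos hk, mul_div_cancel_right₀ _ this]
  norm_num

theorem continuous_gnPow (k j : ℕ) : Continuous (gnPow k j) := by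
  unfold gnPow
  split_ifs
  · exact continuous_const
  · exact continuous_abs.rpow_const fun _ => Or.inr (by positivity)

theorem gnPow_zero {k : ℕ} (hk : 0 < k) (j : ℕ) : gnPow k j 0 = 0 := by
  unfold gnPow
  split_ifs with h
  · rfl
  · have : 0 < j := Nat.pos_of_ne_zero h
    rw [abs_zero, Real.zero_rpow (by positivity)]

theorem gnPow_rpow {k j : ℕ} (hk : 0 < k) (hj : 0 < j) (t r : ℝ) :
    gnPow k j t ^ (r * j / (2 * k) : ℝ) = |t| ^ r := by
  rw [gnPow_of_pos hj, ← Real.rpow_mul (abs_nonneg t)]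
  congr 1
  field_simp

theorem exists_gnPow_young {k m : ℕ} (hm : m + 2 ≤ k) {ε : ℝ} (hε : 0 < ε) :
    ∃ C : ℝ, 0 ≤ C ∧ ∀ a b c : ℝ, (m = 0 → |a| ≤ 1) →
      ((2 * k / (m + 1 : ℕ) - 2 : ℝ) + 1) * (|a| * |b| * |c| ^ (2 * k / (m + 1 : ℕ) - 2 : ℝ)) ≤
        ε * gnPow k m a + C * gnPow k (m + 2) b + ε * gnPow k (m + 1) c := by
  have hk : 0 < k := by omega
  have hkm : (m : ℝ) + 2 ≤ k := by exact_mod_cast hm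
  have hk' : (0 : ℝ) < k := by positivity
  set r : ℝ := 2 * k / (m + 1 : ℕ) - 2 with hr
  have hr0 : 0 ≤ r := by
    rw [hr, sub_nonneg, le_div_iff₀ (by positivity)]
    push_cast
    linarith
  have hsum : (1 * m / (2 * k) + 1 * (m + 2 : ℕ) / (2 * k) + r * (m + 1 : ℕ) / (2 * k) : ℝ) = 1 := by
    rw [hr]
    push_cast
    field_simp
    ring
  obtain ⟨C, hC, hyoung⟩ := exists_young_three (by positivity) (by positivity) (by positivity) hsum
    (by linarith : (0 : ℝ) ≤ r + 1) hε
  refine ⟨C, hC, fun a b c ha => ?_⟩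
  refine le_trans ?_ (hyoung (gnPow k m a) (gnPow k (m + 2) b) (gnPow k (m + 1) c)
    (gnPow_nonneg ..) (gnPow_nonneg ..) (gnPow_nonneg ..))
  rw [gnPow_rpow (j := m + 2) hk (by omega), gnPow_rpow (j := m + 1) hk (by omega), Real.rpow_one]
  have ha' : |a| ≤ gnPow k m a ^ (1 * m / (2 * k) : ℝ) := by
    rcases Nat.eq_zero_or_pos m with rfl | hm0
    · simpa using ha rfl
    · rw [gnPow_rpow hk hm0, Real.rpow_one]
  gcongr

theorem sq_mul_le_gnPow_add {k i j : ℕ} (hk : 0 < k) (hij : i + j = k) {a b : ℝ}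
    (ha : i = 0 → |a| ≤ 1) (hb : j = 0 → |b| ≤ 1) :
    (a * b) ^ 2 ≤ gnPow k i a + gnPow k j b := by
  rcases Nat.eq_zero_or_pos i with rfl | hi
  · obtain rfl : j = k := by omega
    rw [gnPow_self hk, mul_pow]
    nlinarith [gnPow_nonneg j 0 a, (sq_le_one_iff_abs_le_one a).2 (ha rfl), sq_nonneg b]
  rcases Nat.eq_zero_or_pos j with rfl | hj
  · obtain rfl : i = k := by omega
    rw [gnPow_self hk, mul_pow]
    nlinarith [gnPow_nonneg i 0 b, (sq_le_one_iff_abs_le_one b).2 (hb rfl), sq_nonneg a]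
  have hsum : (2 * i / (2 * k) + 2 * j / (2 * k) : ℝ) = 1 := by
    rw [← hij]
    push_cast
    field_simp
  have hmean := Real.geom_mean_le_arith_mean2_weighted (by positivity) (by positivity)
    (gnPow_nonneg k i a) (gnPow_nonneg k j b) hsum
  rw [gnPow_rpow hk hi, gnPow_rpow hk hj] at hmean
  have hi' : (0 : ℝ) ≤ 2 * i / (2 * k) := by positivity
  have hj' : (0 : ℝ) ≤ 2 * j / (2 * k) := by positivity
  calc (a * b) ^ 2 = |a| ^ (2 : ℝ) * |b| ^ (2 : ℝ) := by
        norm_num [mul_pow]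
    _ ≤ _ := hmean
    _ ≤ _ := add_le_add (mul_le_of_le_one_left (gnPow_nonneg ..) (by linarith))
        (mul_le_of_le_one_left (gnPow_nonneg ..) (by linarith))

variable {d : ℕ} {f g : EuclideanSpace ℝ (Fin d) → ℝ}

theorem integral_abs_pd_rpow_le (hf : ContDiff ℝ (⊤ : ℕ∞) f) (hc : HasCompactSupport f)
    (i : Fin d) {p : ℝ} (hp : 0 < p) :
    ∫ x, |pd i f x| ^ (p + 2) ≤ ∫ x, (p + 1) * (|f x| * |pd i (pd i f) x| * |pd i f x| ^ p) := by
  have hv := hf.pd i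
  have hf0 := hf.continuous
  have hv0 := hv.continuous
  have hw0 := (hv.pd i).continuous
  have hpow : Continuous fun x => |pd i f x| ^ p :=
    hv0.abs.rpow_const fun _ => Or.inr hp.le
  have hderiv (x) : HasFDerivAt (fun x => |pd i f x| ^ p * pd i f x)
      (((p + 1) * |pd i f x| ^ p) • fderiv ℝ (pd i f) x) x :=
    (hasDerivAt_abs_rpow_mul_self hp _).comp_hasFDerivAt x (hv.differentiable_of_top x).hasFDerivAt
  have hparts := integral_mul_fderiv_eq_neg_fderiv_mul_of_integrable (μ := volume)
    (f := fun x => |pd i f x| ^ p * pd i f x) (g := f) (v := EuclideanSpace.single i (1 : ℝ))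
    ?_ ?_ ?_ (fun x _ => (hderiv x).differentiableAt) (fun x _ => hf.differentiable_of_top x)
  · have hleft : ∫ x, |pd i f x| ^ (p + 2) =
        ∫ x, |pd i f x| ^ p * pd i f x * fderiv ℝ f x (EuclideanSpace.single i 1) := by
      refine integral_congr_ae (.of_forall fun x => ?_)
      change _ = |pd i f x| ^ p * pd i f x * pd i f x
      have h2 : |pd i f x| ^ (2 : ℝ) = pd i f x * pd i f x := by
        norm_num [sq]
      simp only
      rw [Real.rpow_add_of_nonneg (abs_nonneg _) hp.le zero_le_two, h2, mul_assoc]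
    rw [hleft, hparts, ← integral_neg]
    refine (le_abs_self _).trans (abs_integral_le_integral_abs.trans (le_of_eq ?_))
    refine integral_congr_ae (.of_forall fun x => ?_)
    simp only [(hderiv x).fderiv, smul_apply, smul_eq_mul]
    change |-((p + 1) * |pd i f x| ^ p * pd i (pd i f) x * f x)| = _
    rw [abs_neg, abs_mul, abs_mul, abs_of_nonneg (by positivity : 0 ≤ (p + 1) * |pd i f x| ^ p)]
    ring
  · refine Continuous.integrable_of_hasCompactSupport ?_ hc.mul_left
    simp only [(hderiv _).fderiv, smul_apply, smul_eq_mul]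
    exact ((continuous_const.mul hpow).mul hw0).mul hf0
  · exact ((hpow.mul hv0).mul hv0).integrable_of_hasCompactSupport
      (hc.wordDeriv [i]).mul_left
  · exact ((hpow.mul hv0).mul hf0).integrable_of_hasCompactSupport hc.mul_left

theorem integrable_gnPow_wordDeriv (hf : ContDiff ℝ (⊤ : ℕ∞) f) (hc : HasCompactSupport f)
    {k : ℕ} (hk : 0 < k) (j : ℕ) (w : List (Fin d)) :
    Integrable fun x => gnPow k j (wordDeriv w f x) :=
  ((continuous_gnPow k j).comp (hf.continuous_wordDeriv w)).integrable_of_hasCompactSupport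
    ((hc.wordDeriv w).comp_left (gnPow_zero hk j))

theorem integrable_sq_wordDeriv (hf : ContDiff ℝ (⊤ : ℕ∞) f) (hc : HasCompactSupport f)
    (w : List (Fin d)) : Integrable fun x => wordDeriv w f x ^ 2 := by
  have hcont := hf.continuous_wordDeriv w
  simp only [sq]
  exact (hcont.mul hcont).integrable_of_hasCompactSupport (hc.wordDeriv w).mul_left

/-- The sum of the integrals of `|D^w f| ^ (2k/j)` over all words `w` of length `j`. -/
def gnSum (k j : ℕ) (f : EuclideanSpace ℝ (Fin d) → ℝ) : ℝ :=
  ∑ v : List.Vector (Fin d) j, ∫ x, gnPow k j (wordDeriv v.1 f x)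

theorem gnSum_nonneg (k j : ℕ) : 0 ≤ gnSum k j f :=
  Finset.sum_nonneg fun _ _ => integral_nonneg fun _ => gnPow_nonneg ..

theorem integral_gnPow_le_gnSum {k j : ℕ} {w : List (Fin d)} (hw : w.length = j) :
    ∫ x, gnPow k j (wordDeriv w f x) ≤ gnSum k j f :=
  Finset.single_le_sum (f := fun v : List.Vector (Fin d) j => ∫ x, gnPow k j (wordDeriv v.1 f x))
    (fun _ _ => integral_nonneg fun _ => gnPow_nonneg ..) (Finset.mem_univ ⟨w, hw⟩)

theorem exists_gnSum_le_absorb (d : ℕ) {k m : ℕ} (hm : m + 2 ≤ k) {ε : ℝ} (hε : 0 < ε) :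
    ∃ C : ℝ, 0 ≤ C ∧ ∀ f : EuclideanSpace ℝ (Fin d) → ℝ, ContDiff ℝ (⊤ : ℕ∞) f →
      HasCompactSupport f → (∀ x, |f x| ≤ 1) →
        gnSum k (m + 1) f ≤ ε * (gnSum k m f + gnSum k (m + 1) f) + C * gnSum k (m + 2) f := by
  have hk : 0 < k := by omega
  have hkm : (m : ℝ) + 2 ≤ k := by exact_mod_cast hm
  set N : ℕ := Fintype.card (List.Vector (Fin d) (m + 1)) with hN
  obtain ⟨C, hC, hyoung⟩ := exists_gnPow_young hm (ε := ε / (N + 1)) (by positivity)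
  refine ⟨N * C, by positivity, fun f hf hc hf1 => ?_⟩
  have hword (v : List.Vector (Fin d) (m + 1)) :
      ∫ x, gnPow k (m + 1) (wordDeriv v.1 f x) ≤
        ε / (N + 1) * gnSum k m f + C * gnSum k (m + 2) f + ε / (N + 1) * gnSum k (m + 1) f := by
    obtain ⟨w, hw⟩ := v
    match w, hw with
    | [], hw => simp at hw
    | i :: w, hw =>
      have hwm : w.length = m := by simpa using hw
      have hr : (0 : ℝ) < 2 * k / (m + 1 : ℕ) - 2 := by
        rw [sub_pos, lt_div_iff₀ (by positivity)]
        push_cast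
        linarith
      have hint (j : ℕ) (u : List (Fin d)) := integrable_gnPow_wordDeriv hf hc hk j u
      have hparts := integral_abs_pd_rpow_le (hf.wordDeriv w) (hc.wordDeriv w) i hr
      calc ∫ x, gnPow k (m + 1) (wordDeriv (i :: w) f x)
          = ∫ x, |pd i (wordDeriv w f) x| ^ (2 * k / (m + 1 : ℕ) - 2 + 2 : ℝ) := by
            simp only [gnPow_of_pos (Nat.succ_pos m), sub_add_cancel, wordDeriv_cons]
        _ ≤ _ := hparts
        _ ≤ ∫ x, (ε / (N + 1) * gnPow k m (wordDeriv w f x) +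
              C * gnPow k (m + 2) (wordDeriv (i :: i :: w) f x) +
              ε / (N + 1) * gnPow k (m + 1) (wordDeriv (i :: w) f x)) := by
            refine integral_mono_of_nonneg (.of_forall fun x => by positivity)
              ((((hint _ _).const_mul _).add ((hint _ _).const_mul _)).add
                ((hint _ _).const_mul _)) (.of_forall fun x => ?_)
            refine hyoung _ _ _ fun h0 => ?_
            obtain rfl : w = [] := List.eq_nil_of_length_eq_zero (hwm.trans h0)
            exact hf1 x
        _ = ε / (N + 1) * (∫ x, gnPow k m (wordDeriv w f x)) +
              C * (∫ x, gnPow k (m + 2) (wordDeriv (i :: i :: w) f x)) +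
              ε / (N + 1) * (∫ x, gnPow k (m + 1) (wordDeriv (i :: w) f x)) := by
            rw [integral_add (((hint _ _).const_mul _).fun_add ((hint _ _).const_mul _))
              ((hint _ _).const_mul _),
              integral_add ((hint _ _).const_mul _) ((hint _ _).const_mul _)]
            simp only [integral_const_mul]
        _ ≤ _ := by
            gcongr
            · exact integral_gnPow_le_gnSum hwm
            · exact integral_gnPow_le_gnSum (by simp [hwm])
            · exact integral_gnPow_le_gnSum hw
  have hsum := Finset.sum_le_card_nsmul Finset.univ _ _ fun v _ => hword v
  rw [Finset.card_univ, ← hN, nsmul_eq_mul] at hsum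
  refine hsum.trans ?_
  have hfrac : N * (ε / (N + 1)) ≤ ε := by
    rw [mul_div_assoc', div_le_iff₀ (by positivity)]
    nlinarith
  nlinarith [mul_le_mul_of_nonneg_right hfrac (gnSum_nonneg (f := f) k m),
    mul_le_mul_of_nonneg_right hfrac (gnSum_nonneg (f := f) k (m + 1))]

theorem exists_gnSum_le_succ (d : ℕ) {k : ℕ} (j : ℕ) (hj : j + 1 ≤ k) :
    ∃ A : ℝ, 0 ≤ A ∧ ∀ f : EuclideanSpace ℝ (Fin d) → ℝ, ContDiff ℝ (⊤ : ℕ∞) f →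
      HasCompactSupport f → (∀ x, |f x| ≤ 1) → gnSum k j f ≤ A * gnSum k (j + 1) f := by
  induction j with
  | zero => exact ⟨0, le_rfl, fun f _ _ _ => by simp [gnSum, gnPow]⟩
  | succ m ih =>
    obtain ⟨A, hA, hAle⟩ := ih (by omega)
    obtain ⟨C, hC, hCle⟩ := exists_gnSum_le_absorb d hj (ε := 1 / (2 * (A + 1))) (by positivity)
    refine ⟨2 * C, by positivity, fun f hf hc hf1 => ?_⟩
    have hle := hCle f hf hc hf1
    have habs : 1 / (2 * (A + 1)) * (gnSum k m f + gnSum k (m + 1) f) ≤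
        1 / (2 * (A + 1)) * ((A + 1) * gnSum k (m + 1) f) := by
      gcongr
      linarith [hAle f hf hc hf1]
    have hhalf : 1 / (2 * (A + 1)) * ((A + 1) * gnSum k (m + 1) f) = gnSum k (m + 1) f / 2 := by
      field_simp
    linarith

/-- The Gagliardo–Nirenberg interpolation inequality between `L^∞` and `L²` bounds on derivatives
of order `k`, for functions bounded by one. -/
theorem exists_gnSum_le (d : ℕ) {k j : ℕ} (hj : j ≤ k) :
    ∃ A : ℝ, 0 ≤ A ∧ ∀ f : EuclideanSpace ℝ (Fin d) → ℝ, ContDiff ℝ (⊤ : ℕ∞) f →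
      HasCompactSupport f → (∀ x, |f x| ≤ 1) → gnSum k j f ≤ A * gnSum k k f := by
  induction hj using Nat.decreasingInduction with
  | self => exact ⟨1, zero_le_one, fun f _ _ _ => by simp⟩
  | of_succ j hj ih =>
    obtain ⟨A, hA, hAle⟩ := ih
    obtain ⟨B, hB, hBle⟩ := exists_gnSum_le_succ d j hj
    refine ⟨B * A, by positivity, fun f hf hc hf1 => (hBle f hf hc hf1).trans ?_⟩
    rw [mul_assoc]
    exact mul_le_mul_of_nonneg_left (hAle f hf hc hf1) hB

end Interpolation

section CompactSupport

variable {d : ℕ} {f g : EuclideanSpace ℝ (Fin d) → ℝ}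

theorem exists_integral_sq_wordDeriv_mul_le (w : List (Fin d)) :
    ∃ C : ℝ, 0 ≤ C ∧ ∀ f g : EuclideanSpace ℝ (Fin d) → ℝ,
      ContDiff ℝ (⊤ : ℕ∞) f → ContDiff ℝ (⊤ : ℕ∞) g →
      HasCompactSupport f → HasCompactSupport g → (∀ x, |f x| ≤ 1) → (∀ x, |g x| ≤ 1) →
        ∫ x, wordDeriv w (fun y => f y * g y) x ^ 2 ≤
          C * ∑ v : List.Vector (Fin d) w.length,
            ((∫ x, wordDeriv v.1 f x ^ 2) + ∫ x, wordDeriv v.1 g x ^ 2) := by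
  rcases Nat.eq_zero_or_pos w.length with hk | hk
  · obtain rfl := List.eq_nil_of_length_eq_zero hk
    refine ⟨1, zero_le_one, fun f g hf hg hcf hcg hf1 hg1 => ?_⟩
    have hle : ∫ x, wordDeriv [] (fun y => f y * g y) x ^ 2 ≤ ∫ x, wordDeriv [] f x ^ 2 := by
      refine integral_mono_of_nonneg (.of_forall fun x => sq_nonneg _)
        (integrable_sq_wordDeriv hf hcf []) (.of_forall fun x => ?_)
      simp only [wordDeriv_nil, mul_pow]
      exact mul_le_of_le_one_right (sq_nonneg _) ((sq_le_one_iff_abs_le_one _).2 (hg1 x))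
    rw [one_mul]
    refine le_trans ?_ (Finset.single_le_sum (fun v _ => ?_) (Finset.mem_univ ⟨[], rfl⟩))
    · exact hle.trans (le_add_of_nonneg_right (integral_nonneg fun _ => sq_nonneg _))
    · exact add_nonneg (integral_nonneg fun _ => sq_nonneg _) (integral_nonneg fun _ => sq_nonneg _)
  obtain ⟨ι, _, u, v, hlen, hsum⟩ := exists_wordDeriv_mul_eq_sum w
  choose A hA hAle using fun i => exists_gnSum_le d (Nat.le.intro (hlen i))
  choose B hB hBle using fun i => exists_gnSum_le d ((Nat.le_add_left _ _).trans_eq (hlen i))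
  refine ⟨Fintype.card ι * ∑ i, (A i + B i), ?_, fun f g hf hg hcf hcg hf1 hg1 => ?_⟩
  · exact mul_nonneg (Nat.cast_nonneg _) (Finset.sum_nonneg fun i _ => add_nonneg (hA i) (hB i))
  set S := ∑ v : List.Vector (Fin d) w.length,
    ((∫ x, wordDeriv v.1 f x ^ 2) + ∫ x, wordDeriv v.1 g x ^ 2) with hS
  have hSsum : S = gnSum w.length w.length f + gnSum w.length w.length g := by
    simp only [gnSum, gnPow_self hk, hS, Finset.sum_add_distrib]
  have hif (i : ι) := integrable_gnPow_wordDeriv hf hcf hk (u i).length (u i)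
  have hig (i : ι) := integrable_gnPow_wordDeriv hg hcg hk (v i).length (v i)
  calc ∫ x, wordDeriv w (fun y => f y * g y) x ^ 2
      ≤ ∫ x, Fintype.card ι * ∑ i, (gnPow w.length (u i).length (wordDeriv (u i) f x) +
          gnPow w.length (v i).length (wordDeriv (v i) g x)) := by
        refine integral_mono_of_nonneg (.of_forall fun x => sq_nonneg _)
          ((integrable_finsetSum _ fun i _ => (hif i).fun_add (hig i)).const_mul _)
          (.of_forall fun x => ?_)
        simp only [hsum f g hf hg, Finset.sum_apply]
        refine sq_sum_le_card_mul_sum_sq.trans ?_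
        rw [Finset.card_univ]
        gcongr with i
        refine sq_mul_le_gnPow_add hk (hlen i) (fun h => ?_) (fun h => ?_)
        · rw [List.eq_nil_of_length_eq_zero h]
          exact hf1 x
        · rw [List.eq_nil_of_length_eq_zero h]
          exact hg1 x
    _ = Fintype.card ι * ∑ i, ((∫ x, gnPow w.length (u i).length (wordDeriv (u i) f x)) +
          ∫ x, gnPow w.length (v i).length (wordDeriv (v i) g x)) := by
        rw [integral_const_mul, integral_finsetSum _ fun i _ => (hif i).fun_add (hig i)]
        simp only [integral_add (hif _) (hig _)]
    _ ≤ Fintype.card ι * ∑ i, (A i + B i) * S := by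
        gcongr with i
        have hfi := (integral_gnPow_le_gnSum rfl).trans (hAle i f hf hcf hf1)
        have hgi := (integral_gnPow_le_gnSum rfl).trans (hBle i g hg hcg hg1)
        rw [hSsum]
        nlinarith [mul_nonneg (hA i) (gnSum_nonneg (f := g) w.length w.length),
          mul_nonneg (hB i) (gnSum_nonneg (f := f) w.length w.length)]
    _ = _ := by rw [← Finset.sum_mul, mul_assoc]

/-- The sum of the `L²` norms of the derivatives of `f` along all words of length `k`. -/
def wordSeminorm (k : ℕ) (f : EuclideanSpace ℝ (Fin d) → ℝ) : ℝ≥0∞ :=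
  ∑ v : List.Vector (Fin d) k, eLpNorm (wordDeriv v.1 f) 2 volume

theorem eLpNorm_const_mul_real {X : Type*} [MeasurableSpace X] {μ : Measure X} {c : ℝ}
    (hc : 0 ≤ c) (f : X → ℝ) (p : ℝ≥0∞) :
    eLpNorm (fun x => c * f x) p μ = ENNReal.ofReal c * eLpNorm f p μ := by
  have h := eLpNorm_const_smul c f p μ
  rwa [Real.enorm_eq_ofReal hc] at h

theorem wordSeminorm_const_mul {c : ℝ} (hc : 0 ≤ c) (k : ℕ) :
    wordSeminorm k (fun x => c * f x) = ENNReal.ofReal c * wordSeminorm k f := by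
  simp only [wordSeminorm, wordDeriv_const_mul, eLpNorm_const_mul_real hc, Finset.mul_sum]

theorem eLpNorm_wordDeriv_sq (hf : ContDiff ℝ (⊤ : ℕ∞) f) (hc : HasCompactSupport f)
    (w : List (Fin d)) :
    eLpNorm (wordDeriv w f) 2 volume ^ 2 = ENNReal.ofReal (∫ x, wordDeriv w f x ^ 2) := by
  have hmem : MemLp (wordDeriv w f) 2 volume :=
    (hf.continuous_wordDeriv w).memLp_of_hasCompactSupport (hc.wordDeriv w)
  rw [hmem.eLpNorm_eq_integral_rpow_norm (by simp) (by simp), ← ENNReal.ofReal_pow (by positivity)]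
  congr 1
  have hpos : 0 ≤ ∫ x, wordDeriv w f x ^ 2 := integral_nonneg fun _ => sq_nonneg _
  simp only [ENNReal.toReal_ofNat, Real.norm_eq_abs, Real.rpow_ofNat, sq_abs]
  rw [← Real.rpow_natCast, ← Real.rpow_mul hpos]
  norm_num

theorem exists_eLpNorm_wordDeriv_mul_le_of_le_one (w : List (Fin d)) :
    ∃ C : ℝ, 0 ≤ C ∧ ∀ f g : EuclideanSpace ℝ (Fin d) → ℝ,
      ContDiff ℝ (⊤ : ℕ∞) f → ContDiff ℝ (⊤ : ℕ∞) g →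
      HasCompactSupport f → HasCompactSupport g → (∀ x, |f x| ≤ 1) → (∀ x, |g x| ≤ 1) →
        eLpNorm (wordDeriv w fun y => f y * g y) 2 volume ≤
          ENNReal.ofReal C * (wordSeminorm w.length f + wordSeminorm w.length g) := by
  obtain ⟨C, hC, hCle⟩ := exists_integral_sq_wordDeriv_mul_le w
  set N := Fintype.card (List.Vector (Fin d) w.length) with hN
  refine ⟨√(C * (N * 2)), by positivity, fun f g hf hg hcf hcg hf1 hg1 => ?_⟩
  set T := wordSeminorm w.length f + wordSeminorm w.length g with hT
  have hterm (v : List.Vector (Fin d) w.length) (h : EuclideanSpace ℝ (Fin d) → ℝ)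
      (hh : ContDiff ℝ (⊤ : ℕ∞) h) (hch : HasCompactSupport h)
      (hle : wordSeminorm w.length h ≤ T) :
      ENNReal.ofReal (∫ x, wordDeriv v.1 h x ^ 2) ≤ T ^ 2 := by
    rw [← eLpNorm_wordDeriv_sq hh hch]
    gcongr
    exact (Finset.single_le_sum (f := fun v : List.Vector (Fin d) w.length =>
      eLpNorm (wordDeriv v.1 h) 2 volume) (fun _ _ => zero_le) (Finset.mem_univ v)).trans hle
  have hnn (h : EuclideanSpace ℝ (Fin d) → ℝ) (v : List (Fin d)) :
      0 ≤ ∫ x, wordDeriv v h x ^ 2 := integral_nonneg fun _ => sq_nonneg _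
  rw [← ENNReal.pow_le_pow_left_iff two_ne_zero, mul_pow, ← ENNReal.ofReal_pow (by positivity),
    Real.sq_sqrt (by positivity), eLpNorm_wordDeriv_sq (hf.mul hg) hcf.mul_right]
  calc ENNReal.ofReal (∫ x, wordDeriv w (fun y => f y * g y) x ^ 2)
      ≤ ENNReal.ofReal (C * ∑ v : List.Vector (Fin d) w.length,
          ((∫ x, wordDeriv v.1 f x ^ 2) + ∫ x, wordDeriv v.1 g x ^ 2)) :=
        ENNReal.ofReal_le_ofReal (hCle f g hf hg hcf hcg hf1 hg1)
    _ = ENNReal.ofReal C * ∑ v : List.Vector (Fin d) w.length,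
          (ENNReal.ofReal (∫ x, wordDeriv v.1 f x ^ 2) +
            ENNReal.ofReal (∫ x, wordDeriv v.1 g x ^ 2)) := by
        rw [ENNReal.ofReal_mul hC, ENNReal.ofReal_sum_of_nonneg
          fun v _ => add_nonneg (hnn f v.1) (hnn g v.1)]
        simp only [ENNReal.ofReal_add (hnn _ _) (hnn _ _)]
    _ ≤ ENNReal.ofReal C * ∑ v : List.Vector (Fin d) w.length, (T ^ 2 + T ^ 2) := by
        gcongr with v
        · exact hterm v f hf hcf le_self_add
        · exact hterm v g hg hcg le_add_self
    _ = ENNReal.ofReal (C * (N * 2)) * T ^ 2 := by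
        rw [Finset.sum_const, Finset.card_univ, ← hN, nsmul_eq_mul, ENNReal.ofReal_mul hC,
          ENNReal.ofReal_mul (Nat.cast_nonneg _), ENNReal.ofReal_natCast, ENNReal.ofReal_ofNat]
        ring

/-- The Moser product estimate for compactly supported functions. -/
theorem exists_eLpNorm_wordDeriv_mul_le (w : List (Fin d)) :
    ∃ C : ℝ, 0 ≤ C ∧ ∀ f g : EuclideanSpace ℝ (Fin d) → ℝ,
      ContDiff ℝ (⊤ : ℕ∞) f → ContDiff ℝ (⊤ : ℕ∞) g →
      HasCompactSupport f → HasCompactSupport g → ∀ A B : ℝ, 0 < A → 0 < B →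
      (∀ x, |f x| ≤ A) → (∀ x, |g x| ≤ B) →
        eLpNorm (wordDeriv w fun y => f y * g y) 2 volume ≤
          ENNReal.ofReal C * (ENNReal.ofReal A * wordSeminorm w.length g +
            ENNReal.ofReal B * wordSeminorm w.length f) := by
  obtain ⟨C, hC, hCle⟩ := exists_eLpNorm_wordDeriv_mul_le_of_le_one w
  refine ⟨C, hC, fun f g hf hg hcf hcg A B hA hB hfA hgB => ?_⟩
  have hbound (h : EuclideanSpace ℝ (Fin d) → ℝ) {M : ℝ} (hM : 0 < M) (hle : ∀ x, |h x| ≤ M)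
      (x : EuclideanSpace ℝ (Fin d)) : |M⁻¹ * h x| ≤ 1 := by
    rw [abs_mul, abs_of_pos (inv_pos.2 hM), inv_mul_le_iff₀ hM, mul_one]
    exact hle x
  have hnorm := hCle (fun x => A⁻¹ * f x) (fun x => B⁻¹ * g x) (contDiff_const.mul hf)
    (contDiff_const.mul hg) hcf.mul_left hcg.mul_left (hbound f hA hfA) (hbound g hB hgB)
  have hprod : (fun y => f y * g y) = fun y => A * B * (A⁻¹ * f y * (B⁻¹ * g y)) := by
    ext y
    field_simp
  have hAB : 0 ≤ A * B := by positivity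
  have hA1 : A * B * A⁻¹ = B := by field_simp
  have hB1 : A * B * B⁻¹ = A := by field_simp
  rw [hprod, wordDeriv_const_mul, eLpNorm_const_mul_real hAB]
  calc _ ≤ ENNReal.ofReal (A * B) * (ENNReal.ofReal C *
        (wordSeminorm w.length (fun x => A⁻¹ * f x) +
          wordSeminorm w.length (fun x => B⁻¹ * g x))) := by gcongr
    _ = ENNReal.ofReal C * (ENNReal.ofReal (A * B) * ENNReal.ofReal B⁻¹ * wordSeminorm w.length g +
          ENNReal.ofReal (A * B) * ENNReal.ofReal A⁻¹ * wordSeminorm w.length f) := by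
        rw [wordSeminorm_const_mul (by positivity), wordSeminorm_const_mul (by positivity)]
        ring
    _ = _ := by rw [← ENNReal.ofReal_mul hAB, ← ENNReal.ofReal_mul hAB, hA1, hB1]

end CompactSupport

section Localization

variable {d : ℕ} {f g : EuclideanSpace ℝ (Fin d) → ℝ}

theorem eLpNorm_wordDeriv_le_ulSobolev (hf : ContDiff ℝ (⊤ : ℕ∞) f) {s : ℕ} {w : List (Fin d)}
    (hw : w.length ≤ s) (x : EuclideanSpace ℝ (Fin d)) :
    eLpNorm (wordDeriv w f) 2 (volume.restrict (ball x 1)) ≤ ulSobolev d s f := by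
  rw [wordDeriv_eq_Dm hf]
  exact (le_iSup (fun x => eLpNorm (Dm (fun i => w.count i) f) 2 (volume.restrict (ball x 1)))
    x).trans (Finset.single_le_sum (f := fun α => ⨆ x : EuclideanSpace ℝ (Fin d),
      eLpNorm (Dm α f) 2 (volume.restrict (ball x 1))) (fun _ _ => zero_le) (count_mem_mSet hw))

theorem eLpNorm_mul_le_of_support_subset {X : Type*} [MeasurableSpace X] {μ : Measure X}
    {S : Set X} (hS : MeasurableSet S) {φ h : X → ℝ} {M : ℝ} (hM : ∀ y, |φ y| ≤ M)
    (hφ : Function.support φ ⊆ S) (p : ℝ≥0∞) :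
    eLpNorm (fun y => φ y * h y) p μ ≤ ENNReal.ofReal M * eLpNorm h p (μ.restrict S) := by
  rw [← eLpNorm_indicator_eq_eLpNorm_restrict hS]
  refine eLpNorm_le_mul_eLpNorm_of_ae_le_mul (.of_forall fun y => ?_) p
  by_cases hy : y ∈ S
  · rw [Set.indicator_of_mem hy, norm_mul]
    exact mul_le_mul_of_nonneg_right (hM y) (norm_nonneg _)
  · rw [Function.notMem_support.1 fun h => hy (hφ h)]
    simp [hy]

theorem exists_wordSeminorm_cutoff_mul_le {χ : EuclideanSpace ℝ (Fin d) → ℝ}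
    (hχ : ContDiff ℝ (⊤ : ℕ∞) χ) (hχc : HasCompactSupport χ) (hχs : tsupport χ ⊆ ball 0 1)
    {k s : ℕ} (hk : k ≤ s) :
    ∃ C : ℝ, 0 ≤ C ∧ ∀ f : EuclideanSpace ℝ (Fin d) → ℝ, ContDiff ℝ (⊤ : ℕ∞) f →
      ∀ x, wordSeminorm k (fun y => χ (y - x) * f y) ≤ ENNReal.ofReal C * ulSobolev d s f := by
  have hword (w : List.Vector (Fin d) k) : ∃ C : ℝ, 0 ≤ C ∧
      ∀ f : EuclideanSpace ℝ (Fin d) → ℝ, ContDiff ℝ (⊤ : ℕ∞) f → ∀ x,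
        eLpNorm (wordDeriv w.1 fun y => χ (y - x) * f y) 2 volume ≤
          ENNReal.ofReal C * ulSobolev d s f := by
    obtain ⟨ι, _, u, v, hlen, hsum⟩ := exists_wordDeriv_mul_eq_sum w.1
    choose M hM using fun i => (hχc.wordDeriv (u i)).exists_bound_of_continuous
      (hχ.continuous_wordDeriv (u i))
    have hM0 (i : ι) : 0 ≤ M i := (norm_nonneg _).trans (hM i 0)
    refine ⟨∑ i, M i, Finset.sum_nonneg fun i _ => hM0 i, fun f hf x => ?_⟩
    have hχx : ContDiff ℝ (⊤ : ℕ∞) fun y => χ (y - x) := hχ.comp (contDiff_id.sub contDiff_const)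
    rw [hsum _ f hχx hf, ENNReal.ofReal_sum_of_nonneg fun i _ => hM0 i, Finset.sum_mul]
    refine (eLpNorm_sum_le (fun i _ => ((hχx.continuous_wordDeriv _).mul
      (hf.continuous_wordDeriv _)).aestronglyMeasurable) one_le_two).trans
      (Finset.sum_le_sum fun i _ => ?_)
    simp only [wordDeriv_comp_sub]
    refine (eLpNorm_mul_le_of_support_subset (S := ball x 1) measurableSet_ball
      (fun y => hM i (y - x)) (fun y hy => ?_) 2).trans ?_
    · have hmem := hχs (tsupport_wordDeriv_subset (u i) (subset_tsupport _ hy))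
      simpa [dist_eq_norm] using hmem
    · gcongr
      refine eLpNorm_wordDeriv_le_ulSobolev hf ?_ x
      have := hlen i
      have := w.2
      omega
  choose C hC hCle using hword
  refine ⟨∑ w, C w, Finset.sum_nonneg fun w _ => hC w, fun f hf x => ?_⟩
  rw [ENNReal.ofReal_sum_of_nonneg fun w _ => hC w, Finset.sum_mul]
  exact Finset.sum_le_sum fun w _ => hCle w f hf x

theorem exists_eLpNorm_halfBall_wordDeriv_mul_le {s : ℕ} (w : List (Fin d)) (hw : w.length ≤ s) :
    ∃ C : ℝ, 0 ≤ C ∧ ∀ f g : EuclideanSpace ℝ (Fin d) → ℝ,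
      ContDiff ℝ (⊤ : ℕ∞) f → ContDiff ℝ (⊤ : ℕ∞) g → ∀ A B : ℝ, 0 < A → 0 < B →
      (∀ x, |f x| ≤ A) → (∀ x, |g x| ≤ B) → ∀ x,
        eLpNorm (wordDeriv w fun y => f y * g y) 2 (volume.restrict (ball x (1 / 2))) ≤
          ENNReal.ofReal C *
            (ENNReal.ofReal A * ulSobolev d s g + ENNReal.ofReal B * ulSobolev d s f) := by
  let χ : ContDiffBump (0 : EuclideanSpace ℝ (Fin d)) :=
    { rIn := 1 / 2, rOut := 3 / 4, rIn_pos := by norm_num, rIn_lt_rOut := by norm_num }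
  have hχ : ContDiff ℝ (⊤ : ℕ∞) χ := χ.contDiff
  have hχs : tsupport χ ⊆ ball 0 1 := by
    rw [χ.tsupport_eq]
    exact closedBall_subset_ball (by norm_num [χ])
  obtain ⟨C, hC, hCle⟩ := exists_eLpNorm_wordDeriv_mul_le w
  obtain ⟨K, hK, hKle⟩ := exists_wordSeminorm_cutoff_mul_le hχ χ.hasCompactSupport hχs hw
  refine ⟨C * K, by positivity, fun f g hf hg A B hA hB hfA hgB x => ?_⟩
  have hχx : ContDiff ℝ (⊤ : ℕ∞) fun y => χ (y - x) := hχ.comp (contDiff_id.sub contDiff_const)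
  have hχxc : HasCompactSupport fun y => χ (y - x) :=
    χ.hasCompactSupport.comp_homeomorph (Homeomorph.subRight x)
  have hbound (h : EuclideanSpace ℝ (Fin d) → ℝ) {M : ℝ} (hle : ∀ y, |h y| ≤ M)
      (y : EuclideanSpace ℝ (Fin d)) : |χ (y - x) * h y| ≤ M := by
    rw [abs_mul, abs_of_nonneg χ.nonneg]
    exact (mul_le_of_le_one_left (abs_nonneg _) χ.le_one).trans (hle y)
  have hlocal : eLpNorm (wordDeriv w fun y => f y * g y) 2 (volume.restrict (ball x (1 / 2))) =
      eLpNorm (wordDeriv w fun y => χ (y - x) * f y * (χ (y - x) * g y)) 2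
        (volume.restrict (ball x (1 / 2))) := by
    refine eLpNorm_congr_ae (ae_restrict_of_forall_mem measurableSet_ball fun y hy => ?_)
    refine (Filter.EventuallyEq.wordDeriv ?_ w).eq_of_nhds
    filter_upwards [isOpen_ball.mem_nhds hy] with z hz
    have hz1 : χ (z - x) = 1 := χ.one_of_mem_closedBall
      (by simpa [χ, ← dist_eq_norm] using (mem_ball.1 hz).le)
    simp [hz1]
  rw [hlocal]
  refine (eLpNorm_restrict_le _ _ _ _).trans ((hCle _ _ (hχx.mul hf) (hχx.mul hg) hχxc.mul_right
    hχxc.mul_right A B hA hB (hbound f hfA) (hbound g hgB)).trans ?_)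
  calc _ ≤ ENNReal.ofReal C * (ENNReal.ofReal A * (ENNReal.ofReal K * ulSobolev d s g) +
        ENNReal.ofReal B * (ENNReal.ofReal K * ulSobolev d s f)) := by
        gcongr
        · exact hKle g hg x
        · exact hKle f hf x
    _ = _ := by
        rw [ENNReal.ofReal_mul hC]
        ring

theorem exists_eLpNorm_ball_le_sum_halfBall (d : ℕ) :
    ∃ T : Finset (EuclideanSpace ℝ (Fin d)), ∀ h : EuclideanSpace ℝ (Fin d) → ℝ,
      Continuous h → ∀ x, eLpNorm h 2 (volume.restrict (ball x 1)) ≤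
        ∑ t ∈ T, eLpNorm h 2 (volume.restrict (ball (x + t) (1 / 2))) := by
  obtain ⟨T, hT, hcover⟩ := totallyBounded_iff.1
    ((isCompact_closedBall (0 : EuclideanSpace ℝ (Fin d)) 1).totallyBounded.subset
      ball_subset_closedBall) (1 / 2) (by norm_num)
  refine ⟨hT.toFinset, fun h hh x => ?_⟩
  simp only [← eLpNorm_indicator_eq_eLpNorm_restrict measurableSet_ball]
  calc eLpNorm ((ball x 1).indicator h) 2 volume
      ≤ eLpNorm (∑ t ∈ hT.toFinset, (ball (x + t) (1 / 2)).indicator fun y => ‖h y‖) 2 volume := by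
        refine eLpNorm_mono_real fun y => ?_
        have hnn (t) : 0 ≤ (ball (x + t) (1 / 2)).indicator (fun y => ‖h y‖) y :=
          Set.indicator_nonneg (fun _ _ => norm_nonneg _) _
        rw [Finset.sum_apply]
        by_cases hy : y ∈ ball x 1
        · obtain ⟨t, ht, hyt⟩ := Set.mem_iUnion₂.1
            (hcover (show y - x ∈ ball 0 1 by simpa [dist_eq_norm] using hy))
          have hyt' : y ∈ ball (x + t) (1 / 2) := by
            rw [mem_ball, dist_eq_norm] at hyt ⊢
            rwa [← sub_sub]
          refine le_trans (le_of_eq ?_) (Finset.single_le_sum (fun t _ => hnn t)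
            (hT.mem_toFinset.2 ht))
          rw [Set.indicator_of_mem hy, Set.indicator_of_mem hyt']
        · rw [Set.indicator_of_notMem hy, norm_zero]
          exact Finset.sum_nonneg fun t _ => hnn t
    _ ≤ ∑ t ∈ hT.toFinset, eLpNorm ((ball (x + t) (1 / 2)).indicator fun y => ‖h y‖) 2 volume :=
        eLpNorm_sum_le (fun t _ => hh.norm.aestronglyMeasurable.indicator measurableSet_ball)
          one_le_two
    _ = _ := by
        simp only [eLpNorm_indicator_eq_eLpNorm_restrict measurableSet_ball, eLpNorm_norm]

theorem exists_eLpNorm_ball_wordDeriv_mul_le {s : ℕ} (w : List (Fin d)) (hw : w.length ≤ s) :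
    ∃ C : ℝ, 0 ≤ C ∧ ∀ f g : EuclideanSpace ℝ (Fin d) → ℝ,
      ContDiff ℝ (⊤ : ℕ∞) f → ContDiff ℝ (⊤ : ℕ∞) g → ∀ A B : ℝ, 0 < A → 0 < B →
      (∀ x, |f x| ≤ A) → (∀ x, |g x| ≤ B) → ∀ x,
        eLpNorm (wordDeriv w fun y => f y * g y) 2 (volume.restrict (ball x 1)) ≤
          ENNReal.ofReal C *
            (ENNReal.ofReal A * ulSobolev d s g + ENNReal.ofReal B * ulSobolev d s f) := by
  obtain ⟨C, hC, hCle⟩ := exists_eLpNorm_halfBall_wordDeriv_mul_le w hw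
  obtain ⟨T, hT⟩ := exists_eLpNorm_ball_le_sum_halfBall d
  refine ⟨T.card * C, by positivity, fun f g hf hg A B hA hB hfA hgB x => ?_⟩
  refine (hT _ ((hf.mul hg).continuous_wordDeriv w) x).trans ((Finset.sum_le_card_nsmul _ _ _
    fun t _ => hCle f g hf hg A B hA hB hfA hgB (x + t)).trans (le_of_eq ?_))
  rw [nsmul_eq_mul, ENNReal.ofReal_mul (Nat.cast_nonneg _), ENNReal.ofReal_natCast, mul_assoc]

theorem abs_le_toReal_eLpNorm_top (hf : Continuous f) (hfin : eLpNorm f ⊤ volume ≠ ⊤)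
    (x : EuclideanSpace ℝ (Fin d)) : |f x| ≤ (eLpNorm f ⊤ volume).toReal := by
  have hae : ∀ᵐ y, |f y| ≤ (eLpNorm f ⊤ volume).toReal := by
    filter_upwards [ae_le_eLpNormEssSup (f := f) (μ := volume)] with y hy
    rw [← eLpNorm_exponent_top] at hy
    simpa using ENNReal.toReal_mono hfin hy
  have hopen : IsOpen {y | ¬ |f y| ≤ (eLpNorm f ⊤ volume).toReal} := by
    simpa only [not_le] using isOpen_lt continuous_const hf.abs
  have hempty := hopen.measure_eq_zero_iff (μ := volume).1 hae
  by_contra hx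
  exact (Set.eq_empty_iff_forall_notMem.1 hempty x) hx

theorem eq_zero_of_ulSobolev_eq_zero (hf : ContDiff ℝ (⊤ : ℕ∞) f) {s : ℕ}
    (h : ulSobolev d s f = 0) : f = fun _ => 0 := by
  ext x
  have hnorm := (eLpNorm_wordDeriv_le_ulSobolev hf (w := []) (Nat.zero_le s) x).trans_eq h
  rw [wordDeriv_nil, nonpos_iff_eq_zero,
    eLpNorm_eq_zero_iff hf.continuous.aestronglyMeasurable two_ne_zero] at hnorm
  exact Measure.eqOn_open_of_ae_eq hnorm isOpen_ball hf.continuous.continuousOn continuousOn_const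
    (mem_ball_self one_pos)

end Localization

/-- **Lemma 2.8(i) of the paper**: the Moser-type product estimate
`‖D^α(fg)‖_{L²_ul} ≤ C (‖f‖_{L^∞} ‖g‖_{H^s_ul} + ‖g‖_{L^∞} ‖f‖_{H^s_ul})`. -/
theorem moser_product (d : ℕ) (hd : 1 ≤ d) (s : ℕ) (hs : 1 ≤ s) :
    ∃ C : ℝ, 0 < C ∧
      ∀ f g : EuclideanSpace ℝ (Fin d) → ℝ, ContDiff ℝ (⊤ : ℕ∞) f → ContDiff ℝ (⊤ : ℕ∞) g →
        ∀ α : Fin d → ℕ, (∑ i, α i) ≤ s →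
          (⨆ x : EuclideanSpace ℝ (Fin d),
              eLpNorm (Dm α fun y => f y * g y) 2 (volume.restrict (ball x 1)))
            ≤ ENNReal.ofReal C *
              (eLpNorm f ⊤ volume * ulSobolev d s g
                + eLpNorm g ⊤ volume * ulSobolev d s f) := by
  have hmem (α : Fin d → ℕ) (hα : ∑ i, α i ≤ s) : α ∈ mSet d s :=
    Finset.mem_filter.2 ⟨Finset.mem_Iic.2 fun i =>
      (Finset.single_le_sum (fun _ _ => Nat.zero_le _) (Finset.mem_univ i)).trans hα, hα⟩
  choose C hC hCle using fun α : mSet d s => exists_eLpNorm_ball_wordDeriv_mul_le (s := s)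
    (multiIndexWord α.1) ((length_multiIndexWord _).trans_le (Finset.mem_filter.1 α.2).2)
  have hCsum : 0 ≤ ∑ α, C α := Finset.sum_nonneg fun α _ => hC α
  have hC1 : 0 < 1 + ∑ α, C α := by positivity
  refine ⟨1 + ∑ α, C α, hC1, fun f g hf hg α hα => ?_⟩
  by_cases hzero : (fun y => f y * g y) = fun _ => 0
  · simp only [hzero, Dm_eq_wordDeriv, wordDeriv_zero]
    simp
  have hf0 : f ≠ fun _ => 0 := by
    rintro rfl
    simp at hzero
  have hg0 : g ≠ fun _ => 0 := by
    rintro rfl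
    simp at hzero
  have hpos (h : EuclideanSpace ℝ (Fin d) → ℝ) (hh : ContDiff ℝ (⊤ : ℕ∞) h)
      (h0 : h ≠ fun _ => 0) : eLpNorm h ⊤ volume ≠ 0 := fun hnorm => h0 <| by
    ext x
    have := abs_le_toReal_eLpNorm_top hh.continuous (by simp [hnorm]) x
    rw [hnorm] at this
    simpa using this
  have hC0 : ENNReal.ofReal (1 + ∑ α, C α) ≠ 0 := by simpa using hC1
  by_cases hftop : eLpNorm f ⊤ volume = ⊤
  · rw [hftop, ENNReal.top_mul fun h => hg0 (eq_zero_of_ulSobolev_eq_zero hg h), top_add,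
      ENNReal.mul_top hC0]
    exact le_top
  by_cases hgtop : eLpNorm g ⊤ volume = ⊤
  · rw [hgtop, ENNReal.top_mul fun h => hf0 (eq_zero_of_ulSobolev_eq_zero hf h), add_top,
      ENNReal.mul_top hC0]
    exact le_top
  refine iSup_le fun x => ?_
  have hle := hCle ⟨α, hmem α hα⟩ f g hf hg _ _ (ENNReal.toReal_pos (hpos f hf hf0) hftop)
    (ENNReal.toReal_pos (hpos g hg hg0) hgtop) (abs_le_toReal_eLpNorm_top hf.continuous hftop)
    (abs_le_toReal_eLpNorm_top hg.continuous hgtop) x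
  rw [ENNReal.ofReal_toReal hftop, ENNReal.ofReal_toReal hgtop] at hle
  rw [Dm_eq_wordDeriv]
  refine hle.trans ?_
  gcongr
  exact (Finset.single_le_sum (fun α _ => hC α) (Finset.mem_univ _)).trans
    (le_add_of_nonneg_left zero_le_one)
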